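/- Let λ > 0. If u : ℝ → ℝ is twice continuously differentiable on [0, ∞), satisfies (1/2)·u''(x) + (λ/2)·(u(x) − 1)² = 0 for all x ≥ 0, and 0 ≤ u(x) ≤ 1 for all x ≥ 0, then u(x) → 1 as x → ∞. -/

import Mathlib

/-! The equation makes `u` concave, and a concave function bounded below on an unbounded interval is
monotone. If `u''` stayed below a negative constant, integrating twice would force `u → -∞`; so
`u''`, which is nonpositive, has `0` as a cluster value at infinity. As `u'' = -λ (u - 1)²` can be
small only where `u` is close to `1`, the value `1` is a cluster value of `u`, and a monotone
function converges to any of its cluster values. -/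

open Filter Set Topology

theorem monotoneOn_of_concaveOn_of_bddBelow {𝕜 : Type*} [Field 𝕜] [LinearOrder 𝕜]
    [IsStrictOrderedRing 𝕜] {s : Set 𝕜} {f : 𝕜 → 𝕜} (hf : ConcaveOn 𝕜 s f) (hs : ¬BddAbove s)
    (hbdd : BddBelow (f '' s)) : MonotoneOn f s := by
  intro x hx y hy hxy
  by_contra! hlt
  obtain ⟨B, hB⟩ := hbdd
  have hlt_xy : x < y := hxy.lt_of_ne (by rintro rfl; exact hlt.false)
  have hBy : B ≤ f y := hB (mem_image_of_mem f hy)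
  set m := (f y - f x) / (y - x)
  have hm : m < 0 := div_neg_of_neg_of_pos (sub_neg.2 hlt) (sub_pos.2 hlt_xy)
  -- `y + (B - f y) / m` is where the line through the graph at `x` and `y` reaches the height `B`.
  obtain ⟨z, hz, hyz⟩ := not_bddAbove_iff.1 hs (y + (B - f y) / m)
  have hlt_yz : y < z := by linarith [div_nonneg_of_nonpos (sub_nonpos.2 hBy) hm.le]
  have hchord : f z - f y ≤ m * (z - y) :=
    (div_le_iff₀ (sub_pos.2 hlt_yz)).1 (hf.slope_anti_adjacent hx hz hlt_xy hlt_yz)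
  have hbelow : m * (z - y) < B - f y := by
    rw [mul_comm]
    exact (div_lt_iff_of_neg hm).1 (lt_sub_iff_add_lt'.2 hyz)
  linarith [hB (mem_image_of_mem f hz)]

theorem tendsto_nhds_of_monotoneOn_of_mapClusterPt {α β : Type*} [Preorder α] [LinearOrder β]
    [TopologicalSpace β] [OrderTopology β] {f : α → β} {s : Set α} {b : β}
    (hf : MonotoneOn f s) (hs : ∀ᶠ x in atTop, x ∈ s) (hb : MapClusterPt b atTop f) :
    Tendsto f atTop (𝓝 b) := by
  refine tendsto_order.2 ⟨fun l hl => ?_, fun r hr => ?_⟩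
  · obtain ⟨x, hlx, hx⟩ := ((hb.frequently (eventually_gt_nhds hl)).and_eventually hs).exists
    filter_upwards [hs, eventually_ge_atTop x] with y hy hxy
    exact hlx.trans_le (hf hx hy hxy)
  · filter_upwards [hs] with y hy
    obtain ⟨x, hxr, hx, hyx⟩ := ((hb.frequently (eventually_lt_nhds hr)).and_eventually
      (hs.and (eventually_ge_atTop y))).exists
    exact (hf hy hx hyx).trans_lt hxr

theorem mapClusterPt_of_mapClusterPt_comp {ι α β : Type*} [TopologicalSpace α]
    [TopologicalSpace β] {l : Filter ι} {u : ι → α} {F : α → β} {a : α} {b : β}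
    (hF : comap F (𝓝 b) ≤ 𝓝 a) (h : MapClusterPt b l (F ∘ u)) : MapClusterPt a l u := by
  refine mapClusterPt_iff_frequently.2 fun s hs => ?_
  obtain ⟨t, ht, hts⟩ := mem_comap.1 (hF hs)
  exact (h.frequently ht).mono fun x hx => hts hx

theorem tendsto_atBot_of_hasDerivAt_le_neg {f f' : ℝ → ℝ} {C : ℝ} (hC : C < 0)
    (hf : ∀ᶠ x in atTop, HasDerivAt f (f' x) x) (hle : ∀ᶠ x in atTop, f' x ≤ C) :
    Tendsto f atTop atBot := by
  obtain ⟨a, ha⟩ := eventually_atTop.1 (hf.and hle)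
  have hline : Tendsto (fun x => f a + C * (x - a)) atTop atBot :=
    tendsto_atBot_add_const_left _ _
      ((tendsto_atTop_add_const_right atTop (-a) tendsto_id).const_mul_atTop_of_neg hC)
  refine tendsto_atBot_mono' atTop ?_ hline
  filter_upwards [eventually_ge_atTop a] with x hx
  refine sub_le_iff_le_add'.1 ((convex_Ici a).image_sub_le_mul_sub_of_deriv_le
    (fun y hy => (ha y hy).1.continuousAt.continuousWithinAt)
    (fun y hy => (ha y (interior_subset hy)).1.differentiableAt.differentiableWithinAt)
    (fun y hy => ?_) a self_mem_Ici x hx hx)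
  obtain ⟨hderiv, hbound⟩ := ha y (interior_subset hy)
  exact hderiv.deriv.trans_le hbound

theorem mapClusterPt_zero_of_hasDerivAt2_nonpos {f f' f'' : ℝ → ℝ}
    (hf : ∀ᶠ x in atTop, HasDerivAt f (f' x) x) (hf' : ∀ᶠ x in atTop, HasDerivAt f' (f'' x) x)
    (hf''_nonpos : ∀ᶠ x in atTop, f'' x ≤ 0) (hbdd : IsBoundedUnder (· ≥ ·) atTop f) :
    MapClusterPt 0 atTop f'' := by
  have hfreq : ∀ C < 0, ∃ᶠ x in atTop, C < f'' x := by
    intro C hC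
    by_contra hle
    simp only [not_frequently, not_lt] at hle
    have hf'_atBot : Tendsto f' atTop atBot := tendsto_atBot_of_hasDerivAt_le_neg hC hf' hle
    have hf_atBot : Tendsto f atTop atBot :=
      tendsto_atBot_of_hasDerivAt_le_neg neg_one_lt_zero hf (hf'_atBot.eventually_le_atBot (-1))
    exact not_isBoundedUnder_of_tendsto_atBot hf_atBot hbdd
  refine mapClusterPt_iff_frequently.2 fun s hs => ?_
  obtain ⟨C, hC, hCs⟩ := exists_Ioc_subset_of_mem_nhds hs (exists_lt 0)
  exact ((hfreq C hC).and_eventually hf''_nonpos).mono fun x hx => hCs hx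

theorem tendsto_nhds_of_hasDerivAt2_eq_comp {u u' F : ℝ → ℝ} {a p : ℝ}
    (hu : ∀ x > a, HasDerivAt u (u' x) x) (hu' : ∀ x > a, HasDerivAt u' (F (u x)) x)
    (hF_nonpos : ∀ y, F y ≤ 0) (hF : comap F (𝓝 0) ≤ 𝓝 p) (hbdd : BddBelow (u '' Ioi a)) :
    Tendsto u atTop (𝓝 p) := by
  have hconcave : ConcaveOn ℝ (Ioi a) u := by
    refine concaveOn_of_hasDerivWithinAt2_nonpos (convex_Ioi a)
      (fun x hx => (hu x hx).continuousAt.continuousWithinAt)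
      (fun x hx => (hu x (interior_subset hx)).hasDerivWithinAt)
      (fun x hx => (hu' x (interior_subset hx)).hasDerivWithinAt) fun x _ => hF_nonpos (u x)
  have hmono : MonotoneOn u (Ioi a) :=
    monotoneOn_of_concaveOn_of_bddBelow hconcave (not_bddAbove_Ioi a) hbdd
  have hcluster : MapClusterPt 0 atTop (F ∘ u) :=
    mapClusterPt_zero_of_hasDerivAt2_nonpos ((eventually_gt_atTop a).mono hu)
      ((eventually_gt_atTop a).mono hu') (Eventually.of_forall fun x => hF_nonpos (u x))
      (hbdd.isBoundedUnder (Ioi_mem_atTop a))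
  exact tendsto_nhds_of_monotoneOn_of_mapClusterPt hmono (Ioi_mem_atTop a)
    (mapClusterPt_of_mapClusterPt_comp hF hcluster)

theorem hasDerivAt_iteratedDerivWithin {𝕜 E : Type*} [NontriviallyNormedField 𝕜]
    [NormedAddCommGroup E] [NormedSpace 𝕜 E] {f : 𝕜 → E} {s : Set 𝕜} {x : 𝕜} {n : ℕ}
    {m : WithTop ℕ∞} (hf : ContDiffOn 𝕜 m f s) (hn : n < m) (hs : UniqueDiffOn 𝕜 s)
    (hx : s ∈ 𝓝 x) :
    HasDerivAt (iteratedDerivWithin n f s) (iteratedDerivWithin (n + 1) f s x) x := by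
  rw [iteratedDerivWithin_succ]
  exact (hf.differentiableOn_iteratedDerivWithin hn hs x
    (mem_of_mem_nhds hx)).hasDerivWithinAt.hasDerivAt hx

theorem comap_const_mul_sub_sq_nhds_zero_le {c : ℝ} (hc : c ≠ 0) (p : ℝ) :
    comap (fun y => c * (y - p) ^ 2) (𝓝 0) ≤ 𝓝 p := by
  have hsq : Tendsto (fun y => c⁻¹ * (c * (y - p) ^ 2))
      (comap (fun y => c * (y - p) ^ 2) (𝓝 0)) (𝓝 (c⁻¹ * 0)) :=
    tendsto_comap.const_mul c⁻¹
  have hdist : Tendsto (fun y => dist y p) (comap (fun y => c * (y - p) ^ 2) (𝓝 0)) (𝓝 0) := by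
    simpa only [inv_mul_cancel_left₀ hc, Real.sqrt_sq_eq_abs, mul_zero, Real.sqrt_zero,
      Real.dist_eq] using hsq.sqrt
  exact tendsto_id'.1 (tendsto_iff_dist_tendsto_zero.2 hdist)

theorem stmt_2_general (lam : ℝ) (hlam : 0 < lam) (u : ℝ → ℝ)
    (hreg : ContDiffOn ℝ 2 u (Ici 0))
    (hode : ∀ x ≥ 0, (1 / 2) * iteratedDerivWithin 2 u (Ici 0) x
      + (lam / 2) * (u x - 1) ^ 2 = 0)
    (hbdd : BddBelow (u '' Ici 0)) :
    Tendsto u atTop (𝓝 1) := by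
  have hu : ∀ x > 0, HasDerivAt u (iteratedDerivWithin 1 u (Ici 0) x) x := fun x hx => by
    simpa only [iteratedDerivWithin_zero] using hasDerivAt_iteratedDerivWithin (n := 0) hreg
      (by norm_num) (uniqueDiffOn_Ici 0) (Ici_mem_nhds hx)
  have hu' : ∀ x > 0,
      HasDerivAt (iteratedDerivWithin 1 u (Ici 0)) (-lam * (u x - 1) ^ 2) x := fun x hx =>
    (hasDerivAt_iteratedDerivWithin hreg (by norm_num) (uniqueDiffOn_Ici 0)
      (Ici_mem_nhds hx)).congr_deriv (by linarith [hode x hx.le])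
  exact tendsto_nhds_of_hasDerivAt2_eq_comp (F := fun y => -lam * (y - 1) ^ 2) hu hu'
    (fun y => mul_nonpos_of_nonpos_of_nonneg (neg_nonpos.2 hlam.le) (sq_nonneg _))
    (comap_const_mul_sub_sq_nhds_zero_le (neg_ne_zero.2 hlam.ne') 1)
    (hbdd.mono (image_mono Ioi_subset_Ici_self))

/-- Any C² solution on [0,∞) of (1/2)·u'' + (λ/2)·(u − 1)² = 0 with values in
[0,1] tends to 1 at infinity. -/
theorem stmt_2 (lam : ℝ) (hlam : 0 < lam) (u : ℝ → ℝ)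
    (hreg : ContDiffOn ℝ 2 u (Set.Ici 0))
    (hode : ∀ x ≥ 0, (1 / 2) * iteratedDerivWithin 2 u (Set.Ici 0) x
      + (lam / 2) * (u x - 1) ^ 2 = 0)
    (hbd : ∀ x ≥ 0, 0 ≤ u x ∧ u x ≤ 1) :
    Filter.Tendsto u Filter.atTop (nhds 1) :=
  stmt_2_general lam hlam u hreg hode ⟨0, forall_mem_image.2 fun x hx => (hbd x hx).1⟩
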